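/- Fix a ∈ ℝ. Let (Φ, W, Ψ, θ) be a solution of system (D) defined on (−∞, 0] with Φ(τ) > 0 and θ(τ) ∈ (−π/2, π/2) for all τ ≤ 0, and suppose Φ(τ) → +∞ as τ → −∞. Set x = (Φ(0), W(0), Ψ(0), θ(0)). Then there exists δ > 0 such that for every y = (Φ̃₀, W̃₀, Ψ̃₀, θ̃₀) ∈ ℝ⁴ with |y − x| < δ, Φ̃₀ > 0 and θ̃₀ ∈ (−π/2, π/2), there exists a solution (Φ̃, W̃, Ψ̃, θ̃) of system (D) on (−∞, 0] with (Φ̃, W̃, Ψ̃, θ̃)(0) = y, Φ̃ > 0 on (−∞, 0], and Φ̃(τ) → +∞ as τ → −∞. -/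

import Mathlib

open Filter Set

/-- The right-hand side of the `Ψ` equation in system (D). -/
noncomputable def dPsi (a Φ W Ψ θ : ℝ) : ℝ :=
  1 / Φ ^ 3 - 1 - (a - 1) * Real.cos θ ^ 2 -
    (((16 / 3) * Real.sin θ - (224 / 27) * Real.sin θ ^ 3) * Real.cos θ ^ ((17 : ℝ) / 3) * Φ
      + ((208 / 81) * Real.sin θ ^ 2 - 10 / 9) * Real.cos θ ^ ((34 : ℝ) / 9) * W
      + (2 / 3) * Real.sin θ * Real.cos θ ^ ((17 : ℝ) / 9) * Ψ)

/-- `(Φ, W, Ψ, θ)` is a solution of system (D) on the set `s`. -/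
noncomputable def SolDOn (a : ℝ) (s : Set ℝ) (Φ W Ψ θ : ℝ → ℝ) : Prop :=
  ∀ τ ∈ s,
    HasDerivWithinAt Φ (W τ) s τ ∧
    HasDerivWithinAt W (Ψ τ) s τ ∧
    HasDerivWithinAt Ψ (dPsi a (Φ τ) (W τ) (Ψ τ) (θ τ)) s τ ∧
    HasDerivWithinAt θ (Real.cos (θ τ) ^ ((26 : ℝ) / 9)) s τ


noncomputable def chainV (g b : ℝ → ℝ) (l m : ℝ) (t : ℝ) (Y : ℝ × ℝ × ℝ) : ℝ × ℝ × ℝ :=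
  (l * Y.2.1, l * Y.2.2, m * (g t - b Y.1))

lemma chainV_lip (g b : ℝ → ℝ) (l m : ℝ) (hl : 0 ≤ l) (hm : 0 ≤ m) {Kb : NNReal}
    (hb : LipschitzWith Kb b) (t : ℝ) :
    LipschitzWith (Real.toNNReal (l + m * Kb)) (chainV g b l m t) := by
  apply LipschitzWith.of_dist_le_mul
  intro x y
  rw [Real.coe_toNNReal _ (by positivity)]
  have h1 : dist x.1 y.1 ≤ dist x y := by rw [Prod.dist_eq]; exact le_max_left _ _
  have h0 : dist x.2 y.2 ≤ dist x y := by rw [Prod.dist_eq (x := x)]; exact le_max_right _ _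
  have h2 : dist x.2.1 y.2.1 ≤ dist x y := by
    refine le_trans ?_ h0; rw [Prod.dist_eq]; exact le_max_left _ _
  have h3 : dist x.2.2 y.2.2 ≤ dist x y := by
    refine le_trans ?_ h0; rw [Prod.dist_eq]; exact le_max_right _ _
  have hD : 0 ≤ dist x y := dist_nonneg
  have hK : 0 ≤ m * (Kb : ℝ) * dist x y := by positivity
  have hlD : 0 ≤ l * dist x y := by positivity
  rw [Prod.dist_eq, Prod.dist_eq]
  refine max_le ?_ (max_le ?_ ?_)
  · simp only [chainV, Real.dist_eq, ← mul_sub, abs_mul, abs_of_nonneg hl]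
    rw [Real.dist_eq] at h2
    nlinarith [mul_le_mul_of_nonneg_left h2 hl]
  · simp only [chainV, Real.dist_eq, ← mul_sub, abs_mul, abs_of_nonneg hl]
    rw [Real.dist_eq] at h3
    nlinarith [mul_le_mul_of_nonneg_left h3 hl]
  · simp only [chainV, Real.dist_eq, ← mul_sub, abs_mul, abs_of_nonneg hm]
    have h4 := hb.dist_le_mul x.1 y.1
    rw [Real.dist_eq] at h4
    have h5 : |g t - b x.1 - (g t - b y.1)| = |b x.1 - b y.1| := by
      rw [← abs_neg]; congr 1; ring
    rw [h5]
    have h6 : |b x.1 - b y.1| ≤ Kb * dist x y :=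
      h4.trans (mul_le_mul_of_nonneg_left h1 (by positivity))
    nlinarith [mul_le_mul_of_nonneg_left h6 hm]

lemma hdw_fst {E F : Type*} [NormedAddCommGroup E] [NormedSpace ℝ E] [NormedAddCommGroup F]
    [NormedSpace ℝ F] {Y : ℝ → E × F} {Y' : E × F} {s : Set ℝ} {t : ℝ}
    (h : HasDerivWithinAt Y Y' s t) : HasDerivWithinAt (fun t => (Y t).1) Y'.1 s t :=
  (hasFDerivAt_fst (𝕜 := ℝ) (p := Y t)).comp_hasDerivWithinAt t h

lemma hdw_snd {E F : Type*} [NormedAddCommGroup E] [NormedSpace ℝ E] [NormedAddCommGroup F]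
    [NormedSpace ℝ F] {Y : ℝ → E × F} {Y' : E × F} {s : Set ℝ} {t : ℝ}
    (h : HasDerivWithinAt Y Y' s t) : HasDerivWithinAt (fun t => (Y t).2) Y'.2 s t :=
  (hasFDerivAt_snd (𝕜 := ℝ) (p := Y t)).comp_hasDerivWithinAt t h

lemma chain_exists_Icc (g b : ℝ → ℝ) (hg : Continuous g) {Kb : NNReal}
    (hb : LipschitzWith Kb b) (B : ℝ) (hB : ∀ x, |b x| ≤ B) (x₀ : ℝ × ℝ × ℝ) (T : ℝ) (hT : 0 < T) :
    ∃ Y : ℝ → ℝ × ℝ × ℝ, Y 0 = x₀ ∧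
      ∀ t ∈ Icc (-T) T, HasDerivWithinAt Y (chainV g b 1 1 t (Y t)) (Icc (-T) T) t := by
  obtain ⟨M, hM⟩ := (isCompact_Icc (a := -T) (b := T)).exists_bound_of_continuousOn hg.continuousOn
  have hM0 : 0 ≤ M := (norm_nonneg _).trans (hM 0 ⟨by linarith, hT.le⟩)
  have hB0 : 0 ≤ B := (abs_nonneg _).trans (hB 0)
  set l : ℝ := 1 / (2 * T) with hl
  have hlp : 0 < l := by positivity
  set m : ℝ := 1 / l ^ 2 with hm
  have hmp : 0 < m := by positivity
  set z₀ : ℝ × ℝ × ℝ := (x₀.1, x₀.2.1 / l, x₀.2.2 / l ^ 2) with hz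
  set A : ℝ := ‖z₀‖ + 2 * T * (m * (M + B)) with hA
  have hA0 : 0 ≤ A := by positivity
  set L : ℝ := l * (‖z₀‖ + A) + m * (M + B) with hL
  have hL0 : 0 ≤ L := by positivity
  have key : IsPicardLindelof (chainV g b l m) (tmin := -T) (tmax := T)
      ⟨0, by linarith, hT.le⟩ z₀ (Real.toNNReal A) 0 (Real.toNNReal L)
      (Real.toNNReal (l + m * Kb)) := by
    refine ⟨fun t _ => (chainV_lip g b l m hlp.le hmp.le hb t).lipschitzOnWith, ?_, ?_, ?_⟩
    · intro x _
      apply Continuous.continuousOn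
      unfold chainV
      fun_prop
    · intro t ht x hx
      rw [Real.coe_toNNReal _ hL0]
      rw [Metric.mem_closedBall, Real.coe_toNNReal _ hA0, dist_eq_norm] at hx
      have hx' : ‖x‖ ≤ ‖z₀‖ + A := by
        have := norm_le_norm_add_norm_sub z₀ x
        rw [norm_sub_rev] at this
        linarith
      have h0 : ‖x.2‖ ≤ ‖x‖ := norm_snd_le x
      have h2 : ‖x.2.1‖ ≤ ‖z₀‖ + A := (norm_fst_le x.2).trans (h0.trans hx')
      have h3 : ‖x.2.2‖ ≤ ‖z₀‖ + A := (norm_snd_le x.2).trans (h0.trans hx')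
      have hMB : 0 ≤ m * (M + B) := by positivity
      rw [Prod.norm_def, Prod.norm_def]
      refine max_le ?_ (max_le ?_ ?_)
      · simp only [chainV, norm_mul, Real.norm_of_nonneg hlp.le]
        nlinarith [mul_le_mul_of_nonneg_left h2 hlp.le]
      · simp only [chainV, norm_mul, Real.norm_of_nonneg hlp.le]
        nlinarith [mul_le_mul_of_nonneg_left h3 hlp.le]
      · simp only [chainV, norm_mul, Real.norm_of_nonneg hmp.le]
        have h4 : ‖g t - b x.1‖ ≤ M + B := (norm_sub_le _ _).trans (add_le_add (hM t ht) (hB _))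
        have h5 : 0 ≤ l * (‖z₀‖ + A) := by positivity
        nlinarith [mul_le_mul_of_nonneg_left h4 hmp.le]
    · rw [Real.coe_toNNReal _ hL0, Real.coe_toNNReal _ hA0]
      simp only [sub_zero, zero_sub, neg_neg, max_self, NNReal.coe_zero]
      have : l * T = 1 / 2 := by rw [hl]; field_simp
      rw [hL]
      have e : (l * (‖z₀‖ + A) + m * (M + B)) * T = (l * T) * (‖z₀‖ + A) + T * (m * (M + B)) := by
        ring
      rw [e, this, hA]
      linarith
  obtain ⟨α, h0, hα⟩ := key.exists_eq_forall_mem_Icc_hasDerivWithinAt₀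
  refine ⟨fun t => ((α t).1, l * (α t).2.1, l ^ 2 * (α t).2.2), ?_, ?_⟩
  · simp only at h0
    simp only [h0, hz]
    ext <;> simp <;> field_simp
  · intro t ht
    have h := hα t ht
    have h1 := hdw_fst h
    have h2 := hdw_fst (hdw_snd h)
    have h3 := hdw_snd (hdw_snd h)
    have := h1.prodMk ((h2.const_mul l).prodMk (h3.const_mul (l^2)))
    convert this using 1
    simp only [chainV]
    ext <;> simp [hm] <;> field_simp

lemma chain_unique (g b : ℝ → ℝ) {Kb : NNReal}
    (hb : LipschitzWith Kb b) (Y Z : ℝ → ℝ × ℝ × ℝ) (T : ℝ) (hT : 0 < T)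
    (hY : ∀ t ∈ Ioo (-T) T, HasDerivAt Y (chainV g b 1 1 t (Y t)) t)
    (hZ : ∀ t ∈ Ioo (-T) T, HasDerivAt Z (chainV g b 1 1 t (Z t)) t)
    (h0 : Y 0 = Z 0) : EqOn Y Z (Ioo (-T) T) := by
  apply ODE_solution_unique_of_mem_Ioo (v := chainV g b 1 1) (s := fun _ => univ) (t₀ := 0)
    (fun t _ => (chainV_lip g b 1 1 zero_le_one zero_le_one hb t).lipschitzOnWith)
    ⟨by linarith, hT⟩ (fun t ht => ⟨hY t ht, trivial⟩) (fun t ht => ⟨hZ t ht, trivial⟩) h0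

lemma chain_exists (g b : ℝ → ℝ) (hg : Continuous g) {Kb : NNReal}
    (hb : LipschitzWith Kb b) (B : ℝ) (hB : ∀ x, |b x| ≤ B) (x₀ : ℝ × ℝ × ℝ) :
    ∃ Y : ℝ → ℝ × ℝ × ℝ, Y 0 = x₀ ∧ ∀ t, HasDerivAt Y (chainV g b 1 1 t (Y t)) t := by
  have ex : ∀ n : ℕ, ∃ Y : ℝ → ℝ × ℝ × ℝ, Y 0 = x₀ ∧
      ∀ t ∈ Ioo (-((n : ℝ) + 1)) (n + 1), HasDerivAt Y (chainV g b 1 1 t (Y t)) t := by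
    intro n
    obtain ⟨Y, h0, hY⟩ := chain_exists_Icc g b hg hb B hB x₀ (n + 1) (by positivity)
    exact ⟨Y, h0, fun t ht => (hY t (Ioo_subset_Icc_self ht)).hasDerivAt (Icc_mem_nhds ht.1 ht.2)⟩
  choose Y h0 hY using ex
  have comp : ∀ m n : ℕ, m ≤ n → ∀ t ∈ Ioo (-((m : ℝ) + 1)) (m + 1), Y n t = Y m t := by
    intro m n hmn t ht
    have hc : (m : ℝ) ≤ n := by exact_mod_cast hmn
    refine chain_unique g b hb (Y n) (Y m) (m + 1) (by positivity) ?_ (hY m) (by rw [h0, h0]) ht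
    intro s hs
    exact hY n s ⟨by linarith [hs.1], by linarith [hs.2]⟩
  have comp' : ∀ m n : ℕ, ∀ t, t ∈ Ioo (-((m : ℝ) + 1)) (m + 1) → t ∈ Ioo (-((n : ℝ) + 1)) (n + 1) →
      Y n t = Y m t := by
    intro m n t hm hn
    rcases le_total m n with h | h
    · exact comp m n h t hm
    · exact (comp n m h t hn).symm
  have hmem : ∀ t : ℝ, t ∈ Ioo (-((⌈|t|⌉₊ : ℝ) + 1)) (⌈|t|⌉₊ + 1) := by
    intro t
    have := Nat.le_ceil |t|
    constructor
    · linarith [neg_abs_le t]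
    · linarith [le_abs_self t]
  refine ⟨fun t => Y ⌈|t|⌉₊ t, by simpa using h0 _, fun t => ?_⟩
  refine (hY ⌈|t|⌉₊ t (hmem t)).congr_of_eventuallyEq ?_
  filter_upwards [Ioo_mem_nhds (hmem t).1 (hmem t).2] with s hs
  exact comp' _ _ s hs (hmem s)

noncomputable def cutB (ε x : ℝ) : ℝ := 1 / (max x ε) ^ 3

lemma cutB_bound (ε : ℝ) (hε : 0 < ε) (x : ℝ) : 0 ≤ cutB ε x ∧ cutB ε x ≤ 1 / ε ^ 3 := by
  have h : ε ≤ max x ε := le_max_right _ _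
  have h' : 0 < max x ε := hε.trans_le h
  unfold cutB
  refine ⟨by positivity, ?_⟩
  gcongr

lemma cutB_lip (ε : ℝ) (hε : 0 < ε) : LipschitzWith (Real.toNNReal (3 / ε ^ 4)) (cutB ε) := by
  apply LipschitzWith.of_dist_le_mul
  intro x y
  rw [Real.coe_toNNReal _ (by positivity), Real.dist_eq, Real.dist_eq]
  unfold cutB
  have hm : |max x ε - max y ε| ≤ |x - y| := abs_max_sub_max_le_abs x y ε
  have hu : ε ≤ max x ε := le_max_right _ _
  have hv : ε ≤ max y ε := le_max_right _ _
  set u := max x ε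
  set v := max y ε
  have hu0 : 0 < u := hε.trans_le hu
  have hv0 : 0 < v := hε.trans_le hv
  have hxu : u⁻¹ ≤ ε⁻¹ := by gcongr
  have hxv : v⁻¹ ≤ ε⁻¹ := by gcongr
  have e1 : 1 / u ^ 3 - 1 / v ^ 3 = (v - u) * (u⁻¹ * v⁻¹) * (u⁻¹ ^ 2 + u⁻¹ * v⁻¹ + v⁻¹ ^ 2) := by
    field_simp
    ring
  have a1 : u⁻¹ * v⁻¹ ≤ ε⁻¹ * ε⁻¹ := by gcongr
  have a2 : u⁻¹ ^ 2 + u⁻¹ * v⁻¹ + v⁻¹ ^ 2 ≤ ε⁻¹ ^ 2 + ε⁻¹ * ε⁻¹ + ε⁻¹ ^ 2 := by gcongr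
  rw [e1, abs_mul, abs_mul, abs_of_pos (show 0 < u⁻¹ * v⁻¹ by positivity),
    abs_of_pos (show 0 < u⁻¹ ^ 2 + u⁻¹ * v⁻¹ + v⁻¹ ^ 2 by positivity), abs_sub_comm]
  calc |u - v| * (u⁻¹ * v⁻¹) * (u⁻¹ ^ 2 + u⁻¹ * v⁻¹ + v⁻¹ ^ 2)
      ≤ |x - y| * (ε⁻¹ * ε⁻¹) * (ε⁻¹ ^ 2 + ε⁻¹ * ε⁻¹ + ε⁻¹ ^ 2) := by gcongr
    _ = 3 / ε ^ 4 * |x - y| := by field_simp; ring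

lemma growth (f f' : ℝ → ℝ) (S c : ℝ) (hS : 0 ≤ S)
    (hf : ∀ t, 0 ≤ t → HasDerivWithinAt f (f' t) (Ici 0) t) (hc : ∀ t, S ≤ t → c ≤ f' t) :
    ∀ t, S ≤ t → f S + c * (t - S) ≤ f t := by
  have hm : MonotoneOn (fun t => f t - c * t) (Ici S) := by
    have hd : ∀ t, S ≤ t → HasDerivWithinAt (fun t => f t - c * t) (f' t - c) (Ici 0) t := by
      intro t ht
      exact ((hf t (hS.trans ht)).sub
        ((hasDerivWithinAt_id t (Ici 0)).const_mul c)).congr_deriv (by ring)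
    have sub : Ici S ⊆ Ici 0 := Ici_subset_Ici.2 hS
    apply monotoneOn_of_hasDerivWithinAt_nonneg (f' := fun t => f' t - c) (convex_Ici S)
    · exact fun t ht => ((hd t ht).mono sub).continuousWithinAt
    · exact fun t ht => (hd t (interior_subset ht)).mono (interior_subset.trans sub)
    · exact fun t ht => sub_nonneg.2 (hc t (interior_subset ht))
  intro t ht
  have := hm (mem_Ici.2 le_rfl) (mem_Ici.2 ht) ht
  simp only at this
  linarith

lemma growth_tendsto (f f' : ℝ → ℝ)
    (hf : ∀ t, 0 ≤ t → HasDerivWithinAt f (f' t) (Ici 0) t) (hc : ∀ᶠ t in atTop, 1 ≤ f' t) :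
    Tendsto f atTop atTop := by
  obtain ⟨S0, hS0⟩ := eventually_atTop.1 hc
  have h := growth f f' (max S0 0) 1 (le_max_right _ _) hf
    (fun t ht => hS0 t ((le_max_left _ _).trans ht))
  have h2 : Tendsto (fun t : ℝ => f (max S0 0) + 1 * (t - max S0 0)) atTop atTop := by
    apply tendsto_atTop_add_const_left
    simp only [one_mul]
    exact tendsto_atTop_add_const_right _ _ tendsto_id
  exact tendsto_atTop_mono' _ (eventually_atTop.2 ⟨_, h⟩) h2

lemma gb_scale (d K C S : ℝ) : gronwallBound d K (d * C) S = d * gronwallBound 1 K C S := by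
  unfold gronwallBound
  split_ifs <;> ring

theorem core (a e : ℝ) (H p q : ℝ → ℝ)
    (hH : ∀ s, 0 ≤ s → HasDerivWithinAt H (p s) (Ici 0) s)
    (hp : ∀ s, 0 ≤ s → HasDerivWithinAt p (q s) (Ici 0) s)
    (hq : ∀ s, 0 ≤ s → HasDerivWithinAt q ((e - s) ^ 2 + a - 1 / (H s) ^ 3) (Ici 0) s)
    (hpos : ∀ s, 0 ≤ s → 0 < H s)
    (hinf : Tendsto (fun s => H s ^ 3 * (1 + (e - s) ^ 2)) atTop atTop) :
    ∃ δ > 0, ∀ e' h' p' q' : ℝ, |e' - e| < δ → |h' - H 0| < δ → |p' - p 0| < δ → |q' - q 0| < δ →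
      ∃ Ht pt qt : ℝ → ℝ, (∀ s, HasDerivAt Ht (pt s) s) ∧ (∀ s, HasDerivAt pt (qt s) s) ∧
        (∀ s, 0 ≤ s → HasDerivAt qt ((e' - s) ^ 2 + a - 1 / (Ht s) ^ 3) s) ∧
        Ht 0 = h' ∧ pt 0 = p' ∧ qt 0 = q' ∧ (∀ s, 0 ≤ s → 0 < Ht s) ∧
        Tendsto Ht atTop atTop := by
  -- growth of the reference solution
  have hq1 : ∀ᶠ s in atTop, 1 ≤ (e - s) ^ 2 + a - 1 / (H s) ^ 3 := by
    filter_upwards [hinf.eventually_ge_atTop 2, eventually_ge_atTop (e + 2 * |a| + 3),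
      eventually_ge_atTop 0] with s h1 h2 h3
    have hp0 := hpos s h3
    have h4 : 1 / (H s) ^ 3 ≤ (1 + (e - s) ^ 2) / 2 := by
      rw [div_le_div_iff₀ (by positivity) (by norm_num)]
      linarith
    have h5 : 2 * |a| + 3 ≤ s - e := by linarith
    have h6 : 2 * |a| + 3 ≤ (e - s) ^ 2 := by nlinarith [abs_nonneg a]
    linarith [neg_abs_le a]
  have hqT := growth_tendsto q _ hq hq1
  have hpT := growth_tendsto p _ hp (hqT.eventually_ge_atTop 1)
  have hHT := growth_tendsto H _ hH (hpT.eventually_ge_atTop 1)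
  -- lower bound
  have hlow : ∃ m > 0, m ≤ 1 ∧ ∀ s, 0 ≤ s → m ≤ H s := by
    obtain ⟨S1, hS1⟩ := eventually_atTop.1 (hHT.eventually_ge_atTop 1)
    have hcont : ContinuousOn H (Icc 0 (max S1 0)) := fun s hs =>
      ((hH s hs.1).continuousWithinAt).mono Icc_subset_Ici_self
    obtain ⟨x, hx, hmin⟩ := isCompact_Icc.exists_isMinOn
      (nonempty_Icc.2 (le_max_right S1 0)) hcont
    refine ⟨min (H x) 1, lt_min (hpos x hx.1) one_pos, min_le_right _ _, fun s hs => ?_⟩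
    rcases le_total s (max S1 0) with h | h
    · exact (min_le_left _ _).trans (hmin ⟨hs, h⟩)
    · exact (min_le_right _ _).trans (hS1 s ((le_max_left _ _).trans h))
  obtain ⟨m, hm0, hm1, hmH⟩ := hlow
  set ε : ℝ := m / 2 with hε
  have hε0 : 0 < ε := by positivity
  obtain ⟨S, hS0, hSe, hS1, hS2, hS3⟩ : ∃ S : ℝ, 0 ≤ S ∧ e + |a| + 1 / ε ^ 3 + 3 ≤ S ∧
      2 ≤ H S ∧ 1 ≤ p S ∧ 1 ≤ q S := by
    have := (eventually_ge_atTop (0:ℝ)).and ((eventually_ge_atTop (e + |a| + 1 / ε ^ 3 + 3)).and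
      ((hHT.eventually_ge_atTop 2).and ((hpT.eventually_ge_atTop 1).and
        (hqT.eventually_ge_atTop 1))))
    exact this.exists
  have hBl := cutB_lip ε hε0
  set K : NNReal := Real.toNNReal (1 + 1 * (Real.toNNReal (3 / ε ^ 4) : ℝ)) with hK
  set C : ℝ := 2 * |e| + 1 + 2 * S with hC
  have hC0 : 0 ≤ C := by positivity
  set G : ℝ := gronwallBound 1 K C S with hG
  set δ : ℝ := min 1 (ε / (2 * (|G| + 1))) with hδ
  have hδ0 : 0 < δ := by
    apply lt_min one_pos
    have := abs_nonneg G
    positivity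
  have hδ1 : δ ≤ 1 := min_le_left _ _
  have hδG : δ * G < ε := by
    have h1 : δ ≤ ε / (2 * (|G| + 1)) := min_le_right _ _
    have hG0 := abs_nonneg G
    rw [le_div_iff₀ (by positivity)] at h1
    nlinarith [le_abs_self G]
  have hε1 : ε ≤ 1 / 2 := by linarith
  refine ⟨δ, hδ0, ?_⟩
  intro e' h' p' q' he hh hp' hq'
  obtain ⟨Y, hY0, hY⟩ := chain_exists (fun t => (e' - t) ^ 2 + a) (cutB ε) (by fun_prop) hBl
    (1 / ε ^ 3) (fun x => abs_le.2 ⟨by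
      have := cutB_bound ε hε0 x
      have h3 : 0 < 1 / ε ^ 3 := by positivity
      linarith, (cutB_bound ε hε0 x).2⟩) (h', p', q')
  set Z : ℝ → ℝ × ℝ × ℝ := fun s => (H s, p s, q s) with hZ
  have hZd : ∀ t, 0 ≤ t → HasDerivWithinAt Z
      (chainV (fun t => (e - t) ^ 2 + a) (cutB ε) 1 1 t (Z t)) (Ici 0) t := by
    intro t ht
    have := (hH t ht).prodMk ((hp t ht).prodMk (hq t ht))
    convert this using 1
    have h1 : max (H t) ε = H t := max_eq_left (by linarith [hmH t ht])
    simp [chainV, hZ, cutB, h1]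
  have gron := dist_le_of_approx_trajectories_ODE (a := 0) (b := S) (f := Z) (g := Y)
    (v := chainV (fun t => (e - t) ^ 2 + a) (cutB ε) 1 1) (K := K) (δ := δ) (εf := 0)
    (εg := δ * C)
    (f' := fun t => chainV (fun t => (e - t) ^ 2 + a) (cutB ε) 1 1 t (Z t))
    (g' := fun t => chainV (fun t => (e' - t) ^ 2 + a) (cutB ε) 1 1 t (Y t))
    (fun t => chainV_lip _ _ 1 1 zero_le_one zero_le_one hBl t)
    (fun t ht => ((hZd t ht.1).continuousWithinAt).mono Icc_subset_Ici_self)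
    (fun t ht => (hZd t ht.1).mono (Ici_subset_Ici.2 ht.1))
    (fun t ht => by simp)
    (fun t ht => (hY t).continuousAt.continuousWithinAt)
    (fun t ht => (hY t).hasDerivWithinAt)
    (by
      intro t ht
      have hCnn : 0 ≤ δ * C := by positivity
      rw [Prod.dist_eq, Prod.dist_eq]
      refine max_le ?_ (max_le ?_ ?_)
      · simpa [chainV] using hCnn
      · simpa [chainV] using hCnn
      · simp only [chainV, one_mul, Real.dist_eq]
        have e1 : (e' - t) ^ 2 + a - cutB ε (Y t).1 - ((e - t) ^ 2 + a - cutB ε (Y t).1)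
          = (e' - e) * (e' - e + 2 * e - 2 * t) := by ring
        rw [e1, abs_mul]
        have e2 : |e' - e + 2 * e - 2 * t| ≤ C := by
          rw [abs_le]
          have := abs_lt.1 he
          constructor <;> linarith [ht.1, ht.2, neg_abs_le e, le_abs_self e]
        exact mul_le_mul he.le e2 (abs_nonneg _) hδ0.le)
    (by
      rw [hY0, Prod.dist_eq, Prod.dist_eq]
      simp only [Real.dist_eq, hZ]
      rw [abs_sub_comm (H 0), abs_sub_comm (p 0), abs_sub_comm (q 0)]
      exact max_le hh.le (max_le hp'.le hq'.le))
  have close : ∀ t ∈ Icc 0 S, dist (Z t) (Y t) < ε := by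
    intro t ht
    refine (gron t ht).trans_lt (lt_of_le_of_lt ?_ hδG)
    rw [hG, ← gb_scale, zero_add, sub_zero]
    exact gronwallBound_mono hδ0.le (by positivity) K.2 ht.2
  have c1 : ∀ t ∈ Icc 0 S, |H t - (Y t).1| < ε := fun t ht =>
    lt_of_le_of_lt (by rw [Prod.dist_eq]; exact le_max_left _ _) (close t ht)
  have c2 : ∀ t ∈ Icc 0 S, |p t - (Y t).2.1| < ε := fun t ht =>
    lt_of_le_of_lt (by
      rw [Prod.dist_eq (x := Z t), Prod.dist_eq (x := (Z t).2)]
      exact (le_max_left _ _).trans (le_max_right _ _)) (close t ht)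
  have c3 : ∀ t ∈ Icc 0 S, |q t - (Y t).2.2| < ε := fun t ht =>
    lt_of_le_of_lt (by
      rw [Prod.dist_eq (x := Z t), Prod.dist_eq (x := (Z t).2)]
      exact (le_max_right _ _).trans (le_max_right _ _)) (close t ht)
  have hSS : S ∈ Icc 0 S := ⟨hS0, le_rfl⟩
  have d1 := abs_lt.1 (c1 S hSS)
  have d2 := abs_lt.1 (c2 S hSS)
  have d3 := abs_lt.1 (c3 S hSS)
  have f1 : ∀ s, HasDerivAt (fun s => (Y s).1) (Y s).2.1 s := fun s => by
    have := hdw_fst (hY s).hasDerivWithinAt (s := univ)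
    rw [hasDerivWithinAt_univ] at this
    simpa [chainV] using this
  have f2 : ∀ s, HasDerivAt (fun s => (Y s).2.1) (Y s).2.2 s := fun s => by
    have := hdw_fst (hdw_snd (hY s).hasDerivWithinAt (s := univ))
    rw [hasDerivWithinAt_univ] at this
    simpa [chainV] using this
  have f3 : ∀ s, HasDerivAt (fun s => (Y s).2.2) ((e' - s) ^ 2 + a - cutB ε (Y s).1) s := fun s => by
    have := hdw_snd (hdw_snd (hY s).hasDerivWithinAt (s := univ))
    rw [hasDerivWithinAt_univ] at this
    simpa [chainV] using this
  have k3 : ∀ t, S ≤ t → 1 ≤ (e' - t) ^ 2 + a - cutB ε (Y t).1 := by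
    intro t ht
    have h1 := (cutB_bound ε hε0 (Y t).1).2
    have h2 := abs_lt.1 he
    have h4 : 0 < 1 / ε ^ 3 := by positivity
    have h3 : |a| + 1 / ε ^ 3 + 2 ≤ t - e' := by linarith
    have h5 : |a| + 1 / ε ^ 3 + 2 ≤ (e' - t) ^ 2 := by nlinarith [abs_nonneg a]
    linarith [neg_abs_le a]
  have g3 := growth (fun s => (Y s).2.2) _ S 1 hS0 (fun t _ => (f3 t).hasDerivWithinAt) k3
  have g2 := growth (fun s => (Y s).2.1) _ S 0 hS0 (fun t _ => (f2 t).hasDerivWithinAt)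
    (fun t ht => by have := g3 t ht; linarith)
  have g1 := growth (fun s => (Y s).1) _ S 0 hS0 (fun t _ => (f1 t).hasDerivWithinAt)
    (fun t ht => by have := g2 t ht; linarith)
  have big : ∀ s, 0 ≤ s → ε ≤ (Y s).1 := by
    intro s hs
    rcases le_total s S with h | h
    · have := abs_lt.1 (c1 s ⟨hs, h⟩)
      have := hmH s hs
      linarith
    · have := g1 s h
      linarith
  refine ⟨fun s => (Y s).1, fun s => (Y s).2.1, fun s => (Y s).2.2, f1, f2, ?_, by simp [hY0],
    by simp [hY0], by simp [hY0], fun s hs => hε0.trans_le (big s hs), ?_⟩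
  · intro s hs
    have := f3 s
    rwa [cutB, max_eq_left (big s hs)] at this
  · have t3 := growth_tendsto _ _ (fun t _ => (f3 t).hasDerivWithinAt)
      (eventually_atTop.2 ⟨S, k3⟩)
    have t2 := growth_tendsto _ _ (fun t _ => (f2 t).hasDerivWithinAt) (t3.eventually_ge_atTop 1)
    exact growth_tendsto _ _ (fun t _ => (f1 t).hasDerivWithinAt) (t2.eventually_ge_atTop 1)

noncomputable def dd (ξ : ℝ) : ℝ := (1 + ξ ^ 2) ^ (-(1 / 9) : ℝ)

lemma dd_pos (ξ : ℝ) : 0 < dd ξ := by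
  unfold dd
  positivity

lemma dd_ne (ξ : ℝ) : dd ξ ≠ 0 := (dd_pos ξ).ne'

lemma dd_npow (ξ : ℝ) (n : ℕ) : dd ξ ^ n = (1 + ξ ^ 2) ^ (-(n / 9) : ℝ) := by
  unfold dd
  rw [← Real.rpow_natCast, ← Real.rpow_mul (by positivity)]
  congr 1
  ring

lemma dd_rel (ξ : ℝ) : dd ξ ^ 9 * (1 + ξ ^ 2) = 1 := by
  have h : (0:ℝ) < 1 + ξ ^ 2 := by positivity
  rw [dd_npow]
  norm_num
  rw [Real.rpow_neg_one]
  field_simp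

lemma dd_le_one (ξ : ℝ) : dd ξ ≤ 1 := by
  unfold dd
  apply Real.rpow_le_one_of_one_le_of_nonpos
  · nlinarith [sq_nonneg ξ]
  · norm_num

lemma dd_deriv (ξ : ℝ) : HasDerivAt dd (-(2 / 9) * ξ * dd ξ ^ 10) ξ := by
  have h : (0:ℝ) < 1 + ξ ^ 2 := by positivity
  have h1 : HasDerivAt (fun ξ : ℝ => 1 + ξ ^ 2) (2 * ξ) ξ := by
    exact ((hasDerivAt_pow 2 ξ).const_add 1).congr_deriv (by norm_num)
  have h2 := h1.rpow_const (p := (-(1 / 9) : ℝ)) (Or.inl h.ne')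
  refine h2.congr_deriv ?_
  rw [dd_npow]
  have : (-(((10 : ℕ) : ℝ) / 9)) = -(1/9) - 1 := by norm_num
  rw [this]
  ring

lemma cos_arctan_rpow (ξ x : ℝ) (n : ℕ) (hx : x = 2 * n / 9) :
    Real.cos (Real.arctan ξ) ^ x = dd ξ ^ n := by
  rw [dd_npow, Real.cos_arctan, Real.sqrt_eq_rpow, one_div, ← Real.rpow_neg (by positivity),
    ← Real.rpow_mul (by positivity), hx]
  congr 1
  ring

lemma cos_arctan_sq' (ξ : ℝ) : Real.cos (Real.arctan ξ) ^ 2 = dd ξ ^ 9 := by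
  rw [← cos_arctan_rpow ξ 2 9 (by norm_num)]
  norm_num

lemma sin_arctan' (ξ : ℝ) : Real.sin (Real.arctan ξ) = ξ * Real.cos (Real.arctan ξ) := by
  rw [Real.sin_arctan, Real.cos_arctan]; ring

lemma dPsi_arctan (a Φ W Ψ ξ : ℝ) : dPsi a Φ W Ψ (Real.arctan ξ) =
    1 / Φ ^ 3 - 1 - (a - 1) * dd ξ ^ 9 -
    (((16 / 3) * ξ * dd ξ ^ 30 - (224 / 27) * ξ ^ 3 * dd ξ ^ 39) * Φ
      + ((208 / 81) * ξ ^ 2 * dd ξ ^ 9 - 10 / 9) * dd ξ ^ 17 * W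
      + (2 / 3) * ξ * dd ξ ^ 13 * Ψ) := by
  have hc := Real.cos_arctan_pos ξ
  have e1 : Real.cos (Real.arctan ξ) * Real.cos (Real.arctan ξ) ^ ((17 : ℝ) / 3) = dd ξ ^ 30 := by
    rw [← cos_arctan_rpow ξ (17 / 3 + 1) 30 (by norm_num), Real.rpow_add_one hc.ne']; ring
  have e3 : Real.cos (Real.arctan ξ) * Real.cos (Real.arctan ξ) ^ ((17 : ℝ) / 9) = dd ξ ^ 13 := by
    rw [← cos_arctan_rpow ξ (17 / 9 + 1) 13 (by norm_num), Real.rpow_add_one hc.ne']; ring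
  have e2 := cos_arctan_rpow ξ (34 / 9) 17 (by norm_num)
  have e4 := cos_arctan_sq' ξ
  unfold dPsi
  rw [sin_arctan', e2, e4]
  have e5 : dd ξ ^ 39 = dd ξ ^ 30 * dd ξ ^ 9 := by ring
  rw [e5, ← e4, ← e1, ← e3]
  ring

lemma exists_FG : ∃ F G : ℝ → ℝ, (∀ x, HasDerivAt F ((dd x ^ 4)⁻¹) x) ∧ (∀ x, F (G x) = x) ∧
    (∀ x, G (F x) = x) ∧ StrictMono F ∧ StrictMono G ∧ Tendsto F atBot atBot ∧
    Tendsto G atBot atBot ∧ (∀ x, HasDerivAt G (dd (G x) ^ 4) x) := by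
  have hcd : Continuous dd := continuous_iff_continuousAt.2 fun x => (dd_deriv x).continuousAt
  have hc : Continuous fun x => (dd x ^ 4)⁻¹ := (hcd.pow 4).inv₀ fun x => (pow_ne_zero _ (dd_ne x))
  set F : ℝ → ℝ := fun x => ∫ u in (0:ℝ)..x, (dd u ^ 4)⁻¹ with hF
  have hd : ∀ x, HasDerivAt F ((dd x ^ 4)⁻¹) x := fun x =>
    intervalIntegral.integral_hasDerivAt_right (hc.intervalIntegrable _ _)
      hc.stronglyMeasurable.stronglyMeasurableAtFilter hc.continuousAt
  have h1 : ∀ x, 1 ≤ (dd x ^ 4)⁻¹ := fun x =>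
    (one_le_inv₀ (pow_pos (dd_pos x) 4)).2 (pow_le_one₀ (dd_pos x).le (dd_le_one x))
  have hmono : StrictMono F := strictMono_of_hasDerivAt_pos hd fun x => one_pos.trans_le (h1 x)
  have hm2 : Monotone fun x => F x - x :=
    monotone_of_hasDerivAt_nonneg (f' := fun x => (dd x ^ 4)⁻¹ - 1)
      (fun x => (hd x).sub (hasDerivAt_id x)) fun x => sub_nonneg.2 (h1 x)
  have hcF : Continuous F := continuous_iff_continuousAt.2 fun x => (hd x).continuousAt
  have hT : Tendsto F atTop atTop := by
    refine tendsto_atTop_mono' _ ?_ (tendsto_atTop_add_const_right atTop (F 0) tendsto_id)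
    filter_upwards [eventually_ge_atTop 0] with x hx
    have := hm2 hx
    simp only [id] at this ⊢
    linarith
  have hB : Tendsto F atBot atBot := by
    refine tendsto_atBot_mono' _ ?_ (tendsto_atBot_add_const_right atBot (F 0) tendsto_id)
    filter_upwards [eventually_le_atBot 0] with x hx
    have := hm2 hx
    simp only [id] at this ⊢
    linarith
  have hsurj : Function.Surjective F := hcF.surjective hT hB
  let o : ℝ ≃o ℝ := hmono.orderIsoOfSurjective F hsurj
  have ho : ∀ x, o x = F x := fun x => rfl
  have hFG : ∀ x, F (o.symm x) = x := fun x => by rw [← ho]; simp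
  refine ⟨F, o.symm, hd, hFG, fun x => by rw [← ho]; simp, hmono,
    o.symm.strictMono, hB, o.symm.tendsto_atBot, fun x => ?_⟩
  have := HasDerivAt.of_local_left_inverse (f := F) (g := o.symm) (a := x)
    o.symm.continuous.continuousAt (hd _) (inv_ne_zero (pow_ne_zero _ (dd_ne _)))
    (Eventually.of_forall hFG)
  simpa using this

/-- backward transformation -/
lemma back_deriv (a : ℝ) (X h p q : ℝ → ℝ) (s : Set ℝ) (t : ℝ) (hh : 0 < h t)
    (hX : HasDerivWithinAt X (dd (X t) ^ 4) s t)
    (hH : HasDerivWithinAt h (-(p t) * dd (X t) ^ 4) s t)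
    (hp : HasDerivWithinAt p (-(q t) * dd (X t) ^ 4) s t)
    (hq : HasDerivWithinAt q (-((X t) ^ 2 + a - 1 / (h t) ^ 3) * dd (X t) ^ 4) s t) :
    let Φ : ℝ → ℝ := fun t => h t * ((dd (X t))⁻¹) ^ 3
    let W : ℝ → ℝ := fun t => (2 / 3) * X t * h t * dd (X t) ^ 10 - p t * dd (X t)
    let Ψ : ℝ → ℝ := fun t => q t * dd (X t) ^ 5 - (4 / 9) * X t * p t * dd (X t) ^ 14
      + (2 / 3) * h t * dd (X t) ^ 14 - (40 / 27) * X t ^ 2 * h t * dd (X t) ^ 23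
    HasDerivWithinAt Φ (W t) s t ∧ HasDerivWithinAt W (Ψ t) s t ∧
      HasDerivWithinAt Ψ (dPsi a (Φ t) (W t) (Ψ t) (Real.arctan (X t))) s t ∧
      HasDerivWithinAt (fun t => Real.arctan (X t))
        (Real.cos (Real.arctan (X t)) ^ ((26 : ℝ) / 9)) s t := by
  intro Φ W Ψ
  have hd : HasDerivWithinAt (fun t => dd (X t)) (-(2 / 9) * X t * dd (X t) ^ 14) s t :=
    ((dd_deriv (X t)).comp_hasDerivWithinAt t hX).congr_deriv (by ring)
  have hne := dd_ne (X t)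
  have hrel := dd_rel (X t)
  refine ⟨?_, ?_, ?_, ?_⟩
  · refine (hH.mul ((hd.inv hne).pow 3)).congr_deriv ?_
    simp only [W, Pi.inv_apply, Pi.pow_apply, Nat.add_one_sub_one]
    norm_num
    field_simp
    ring
  · refine ((((hX.const_mul (2 / 3)).mul hH).mul (hd.pow 10)).sub (hp.mul hd)).congr_deriv ?_
    simp only [Ψ, Pi.mul_apply, Pi.pow_apply]
    have hr2 : dd (X t) ^ 9 * X t ^ 2 = 1 - dd (X t) ^ 9 := by linear_combination hrel
    push_cast
    ring
  · refine ((((hq.mul (hd.pow 5)).sub (((hX.const_mul (4 / 9)).mul hp).mul (hd.pow 14))).add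
      ((hH.const_mul (2 / 3)).mul (hd.pow 14))).sub
      ((((hX.pow 2).const_mul (40 / 27)).mul hH).mul (hd.pow 23))).congr_deriv ?_
    rw [dPsi_arctan]
    have e : 1 / Φ t ^ 3 = dd (X t) ^ 9 / h t ^ 3 := by
      simp only [Φ]; field_simp
    have e2 : (((16 / 3) * X t * dd (X t) ^ 30 - (224 / 27) * X t ^ 3 * dd (X t) ^ 39) * Φ t)
      = (((16 / 3) * X t * dd (X t) ^ 27 - (224 / 27) * X t ^ 3 * dd (X t) ^ 36) * h t) := by
      simp only [Φ]; field_simp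
    rw [e, e2]
    simp only [Pi.mul_apply, Pi.pow_apply, W, Ψ]
    push_cast
    linear_combination (-1 : ℝ) * hrel
  · refine (hX.arctan).congr_deriv ?_
    rw [cos_arctan_rpow _ _ 13 (by norm_num)]
    have : (1 + X t ^ 2) ≠ 0 := by positivity
    field_simp
    linear_combination -hrel

/-- forward transformation -/
noncomputable def fH (ξ Φ : ℝ) : ℝ := Φ * dd ξ ^ 3
noncomputable def fp (ξ Φ W : ℝ) : ℝ := (2 / 3) * ξ * Φ * dd ξ ^ 12 - W * (dd ξ)⁻¹
noncomputable def fq (ξ Φ W Ψ : ℝ) : ℝ := Ψ * (dd ξ)⁻¹ ^ 5 - (4 / 9) * ξ * W * dd ξ ^ 8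
  - (2 / 3) * Φ * dd ξ ^ 12 + (16 / 9) * ξ ^ 2 * Φ * dd ξ ^ 21

lemma forw_deriv (a : ℝ) (X Φ W Ψ : ℝ → ℝ) (s : Set ℝ) (t : ℝ) (hh : 0 < Φ t)
    (hX : HasDerivWithinAt X (-1) s t)
    (hΦ : HasDerivWithinAt Φ (-(W t) * (dd (X t) ^ 4)⁻¹) s t)
    (hW : HasDerivWithinAt W (-(Ψ t) * (dd (X t) ^ 4)⁻¹) s t)
    (hΨ : HasDerivWithinAt Ψ (-(dPsi a (Φ t) (W t) (Ψ t) (Real.arctan (X t))) * (dd (X t) ^ 4)⁻¹)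
      s t) :
    HasDerivWithinAt (fun t => fH (X t) (Φ t)) (fp (X t) (Φ t) (W t)) s t ∧
    HasDerivWithinAt (fun t => fp (X t) (Φ t) (W t)) (fq (X t) (Φ t) (W t) (Ψ t)) s t ∧
    HasDerivWithinAt (fun t => fq (X t) (Φ t) (W t) (Ψ t))
      (X t ^ 2 + a - 1 / (fH (X t) (Φ t)) ^ 3) s t := by
  have hd : HasDerivWithinAt (fun t => dd (X t)) ((2 / 9) * X t * dd (X t) ^ 10) s t :=
    ((dd_deriv (X t)).comp_hasDerivWithinAt t hX).congr_deriv (by ring)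
  have hne := dd_ne (X t)
  have hrel := dd_rel (X t)
  refine ⟨?_, ?_, ?_⟩
  · refine (hΦ.mul (hd.pow 3)).congr_deriv ?_
    simp only [fp, Pi.pow_apply]
    field_simp
    ring
  · refine ((((hX.const_mul (2 / 3)).mul hΦ).mul (hd.pow 12)).sub
      (hW.mul (hd.inv hne))).congr_deriv ?_
    simp only [fq, Pi.pow_apply, Pi.mul_apply, Pi.inv_apply]
    field_simp
    ring
  · refine ((((hΨ.mul ((hd.inv hne).pow 5)).sub (((hX.const_mul (4 / 9)).mul hW).mul
      (hd.pow 8))).sub ((hΦ.const_mul (2 / 3)).mul (hd.pow 12))).add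
      ((((hX.pow 2).const_mul (16 / 9)).mul hΦ).mul (hd.pow 21))).congr_deriv ?_
    rw [dPsi_arctan]
    simp only [fH, Pi.pow_apply, Pi.mul_apply, Pi.inv_apply]
    push_cast
    have hc : ((dd (X t))⁻¹) ^ 9 = 1 + X t ^ 2 := by
      field_simp
      linear_combination -hrel
    linear_combination (norm := (field_simp; ring)) hc

lemma theta_explicit (θ F : ℝ → ℝ) (hF : ∀ x, HasDerivAt F ((dd x ^ 4)⁻¹) x)
    (hd : ∀ τ ≤ (0 : ℝ), HasDerivWithinAt θ (Real.cos (θ τ) ^ ((26 : ℝ) / 9)) (Iic 0) τ)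
    (hθ : ∀ τ ≤ (0 : ℝ), θ τ ∈ Set.Ioo (-(Real.pi / 2)) (Real.pi / 2)) :
    ∀ τ ≤ (0 : ℝ), F (Real.tan (θ τ)) = τ + F (Real.tan (θ 0)) := by
  have hder : ∀ τ ∈ Iic (0 : ℝ),
      HasDerivWithinAt (fun τ => F (Real.tan (θ τ)) - τ) 0 (Iic 0) τ := by
    intro τ hτ
    have hm := hθ τ hτ
    have hc : 0 < Real.cos (θ τ) := Real.cos_pos_of_mem_Ioo hm
    have h1 := (hF (Real.tan (θ τ))).comp_hasDerivWithinAt τ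
      ((Real.hasDerivAt_tan hc.ne').comp_hasDerivWithinAt τ (hd τ hτ))
    refine (h1.sub (hasDerivWithinAt_id τ (Iic 0))).congr_deriv ?_
    have ea : Real.arctan (Real.tan (θ τ)) = θ τ := Real.arctan_tan hm.1 hm.2
    set ξ := Real.tan (θ τ)
    rw [← ea, cos_arctan_sq', cos_arctan_rpow _ _ 13 (by norm_num)]
    have := dd_ne ξ
    field_simp
    norm_num
  intro τ hτ
  have h := (convex_Iic (0:ℝ)).norm_image_sub_le_of_norm_hasDerivWithin_le (C := 0) hder
    (fun x _ => by simp) (mem_Iic.2 le_rfl) (mem_Iic.2 hτ)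
  rw [zero_mul, norm_le_zero_iff, sub_eq_zero] at h
  linarith

theorem stability_blow_up (a : ℝ) (Φ W Ψ θ : ℝ → ℝ)
    (hsol : SolDOn a (Set.Iic 0) Φ W Ψ θ)
    (hΦpos : ∀ τ ≤ (0 : ℝ), 0 < Φ τ)
    (hθ : ∀ τ ≤ (0 : ℝ), θ τ ∈ Set.Ioo (-(Real.pi / 2)) (Real.pi / 2))
    (hinf : Tendsto Φ atBot atTop) :
    ∃ δ > (0 : ℝ), ∀ Φ₀ W₀ Ψ₀ θ₀ : ℝ,
      dist ((Φ₀, W₀, Ψ₀, θ₀) : ℝ × ℝ × ℝ × ℝ) ((Φ 0, W 0, Ψ 0, θ 0) : ℝ × ℝ × ℝ × ℝ) < δ →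
      0 < Φ₀ → θ₀ ∈ Set.Ioo (-(Real.pi / 2)) (Real.pi / 2) →
      ∃ Φt Wt Ψt θt : ℝ → ℝ,
        SolDOn a (Set.Iic 0) Φt Wt Ψt θt ∧
        Φt 0 = Φ₀ ∧ Wt 0 = W₀ ∧ Ψt 0 = Ψ₀ ∧ θt 0 = θ₀ ∧
        (∀ τ ≤ (0 : ℝ), 0 < Φt τ) ∧
        Tendsto Φt atBot atTop := by
  obtain ⟨F, G, hF, hFG, hGF, hFm, hGm, hFB, hGB, hG⟩ := exists_FG
  have hex := theta_explicit θ F hF (fun τ hτ => (hsol τ hτ).2.2.2) hθ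
  set e : ℝ := Real.tan (θ 0) with he
  -- the reference solution in the new variables
  set T : ℝ → ℝ := fun s => F (e - s) - F e with hT
  have hT0 : ∀ s, 0 ≤ s → T s ≤ 0 := fun s hs => by
    have := hFm.monotone (show e - s ≤ e by linarith)
    simp only [hT]; linarith
  have hTd : ∀ s, HasDerivWithinAt T (-(dd (e - s) ^ 4)⁻¹) (Ici 0) s := fun s => by
    have h1 : HasDerivAt (fun s => e - s) (-1) s := by
      simpa using (hasDerivAt_id s).const_sub e
    exact ((((hF (e - s)).comp s h1).sub_const (F e)).congr_deriv (by ring)).hasDerivWithinAt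
  have hmaps : MapsTo T (Ici 0) (Iic 0) := fun s hs => hT0 s hs
  have hTθ : ∀ s, 0 ≤ s → θ (T s) = Real.arctan (e - s) := fun s hs => by
    have h1 := hex (T s) (hT0 s hs)
    have h2 : Real.tan (θ (T s)) = e - s := by
      apply hFm.injective
      rw [h1]; simp [hT]
    rw [← h2, Real.arctan_tan (hθ _ (hT0 s hs)).1 (hθ _ (hT0 s hs)).2]
  have hforw := fun (s : ℝ) (hs : 0 ≤ s) =>
    forw_deriv a (fun s => e - s) (fun s => Φ (T s)) (fun s => W (T s)) (fun s => Ψ (T s))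
      (Ici 0) s (hΦpos _ (hT0 s hs))
      (by simpa using ((hasDerivAt_id s).const_sub e).hasDerivWithinAt)
      (((hsol _ (hT0 s hs)).1.comp s (hTd s) hmaps).congr_deriv (by ring))
      (((hsol _ (hT0 s hs)).2.1.comp s (hTd s) hmaps).congr_deriv (by ring))
      (((hsol _ (hT0 s hs)).2.2.1.comp s (hTd s) hmaps).congr_deriv (by
        rw [← hTθ s hs]; ring))
  have hTB : Tendsto T atTop atBot := by
    have h1 : Tendsto (fun s : ℝ => e - s) atTop atBot :=
      tendsto_atBot_add_const_left _ e tendsto_neg_atTop_atBot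
    exact tendsto_atBot_add_const_right _ _ (hFB.comp h1)
  obtain ⟨δ₀, hδ₀, hcore⟩ := core a e (fun s => fH (e - s) (Φ (T s)))
    (fun s => fp (e - s) (Φ (T s)) (W (T s)))
    (fun s => fq (e - s) (Φ (T s)) (W (T s)) (Ψ (T s)))
    (fun s hs => (hforw s hs).1) (fun s hs => (hforw s hs).2.1) (fun s hs => (hforw s hs).2.2)
    (fun s hs => mul_pos (hΦpos _ (hT0 s hs)) (pow_pos (dd_pos _) 3))
    (by
      have h1 : Tendsto (fun s => Φ (T s) ^ 3) atTop atTop :=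
        (tendsto_pow_atTop (by norm_num)).comp (hinf.comp hTB)
      refine h1.congr fun s => ?_
      simp only [fH]
      linear_combination (-Φ (T s) ^ 3) * dd_rel (e - s))
  have hTz : T 0 = 0 := by simp [hT]
  simp only [sub_zero, hTz] at hcore
  -- continuity of the change of variables at the initial point
  have hcos : Real.cos (θ 0) ≠ 0 := (Real.cos_pos_of_mem_Ioo (hθ 0 le_rfl)).ne'
  have hcd : Continuous dd := continuous_iff_continuousAt.2 fun x => (dd_deriv x).continuousAt
  have hci : Continuous fun x => (dd x)⁻¹ := hcd.inv₀ dd_ne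
  set x₀ : ℝ × ℝ × ℝ × ℝ := (Φ 0, W 0, Ψ 0, θ 0) with hx₀
  have ct : ContinuousAt (fun y : ℝ × ℝ × ℝ × ℝ => Real.tan y.2.2.2) x₀ :=
    ContinuousAt.comp (g := Real.tan) (Real.continuousAt_tan.2 hcos)
      (by fun_prop : ContinuousAt (fun y : ℝ × ℝ × ℝ × ℝ => y.2.2.2) x₀)
  have cdt : ContinuousAt (fun y : ℝ × ℝ × ℝ × ℝ => dd (Real.tan y.2.2.2)) x₀ :=
    hcd.continuousAt.comp ct
  have cit : ContinuousAt (fun y : ℝ × ℝ × ℝ × ℝ => (dd (Real.tan y.2.2.2))⁻¹) x₀ :=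
    cdt.inv₀ (dd_ne _)
  have cH : ContinuousAt (fun y : ℝ × ℝ × ℝ × ℝ => fH (Real.tan y.2.2.2) y.1) x₀ := by
    unfold fH; fun_prop
  have cp : ContinuousAt (fun y : ℝ × ℝ × ℝ × ℝ => fp (Real.tan y.2.2.2) y.1 y.2.1) x₀ := by
    unfold fp; fun_prop
  have cq : ContinuousAt
      (fun y : ℝ × ℝ × ℝ × ℝ => fq (Real.tan y.2.2.2) y.1 y.2.1 y.2.2.1) x₀ := by
    unfold fq; fun_prop
  have hev := ((Metric.tendsto_nhds.1 ct δ₀ hδ₀).and ((Metric.tendsto_nhds.1 cH δ₀ hδ₀).and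
    ((Metric.tendsto_nhds.1 cp δ₀ hδ₀).and (Metric.tendsto_nhds.1 cq δ₀ hδ₀))))
  obtain ⟨δ, hδ, hball⟩ := Metric.eventually_nhds_iff.1 hev
  refine ⟨δ, hδ, ?_⟩
  intro Φ₀ W₀ Ψ₀ θ₀ hdist hΦ₀ hθ₀
  obtain ⟨b1, b2, b3, b4⟩ := hball hdist
  simp only [Real.dist_eq, hx₀] at b1 b2 b3 b4
  obtain ⟨Ht, pt, qt, hHt, hpt, hqt, i1, i2, i3, hHpos, hHinf⟩ := hcore _ _ _ _ b1 b2 b3 b4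
  set e' : ℝ := Real.tan θ₀ with he'
  set X : ℝ → ℝ := fun τ => G (τ + F e') with hX
  have hX0 : X 0 = e' := by simp [hX, hGF]
  have hXd : ∀ τ, HasDerivAt X (dd (X τ) ^ 4) τ := fun τ =>
    HasDerivAt.comp_add_const τ (F e') (hG (τ + F e'))
  have hXle : ∀ τ ≤ (0:ℝ), 0 ≤ e' - X τ := fun τ hτ => by
    have := hGm.monotone (show τ + F e' ≤ F e' by linarith)
    rw [hGF] at this
    simp only [hX]; linarith
  have hσ : ∀ τ, HasDerivAt (fun τ => e' - X τ) (-(dd (X τ) ^ 4)) τ := fun τ =>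
    (hXd τ).const_sub e'
  have hback := fun (τ : ℝ) (hτ : τ ≤ 0) =>
    back_deriv a X (fun τ => Ht (e' - X τ)) (fun τ => pt (e' - X τ)) (fun τ => qt (e' - X τ))
      (Iic 0) τ (hHpos _ (hXle τ hτ)) (hXd τ).hasDerivWithinAt
      (((hHt _).comp τ (hσ τ)).congr_deriv (by ring)).hasDerivWithinAt
      (((hpt _).comp τ (hσ τ)).congr_deriv (by ring)).hasDerivWithinAt
      (((hqt _ (hXle τ hτ)).comp τ (hσ τ)).congr_deriv (by ring)).hasDerivWithinAt
  have hne := dd_ne e'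
  refine ⟨_, _, _, _, fun τ hτ => hback τ hτ, ?_, ?_, ?_, ?_, ?_, ?_⟩
  · simp only [hX0, sub_self, i1, fH]
    field_simp
  · simp only [hX0, sub_self, i1, i2, fH, fp]
    field_simp
    ring
  · simp only [hX0, sub_self, i1, i2, i3, fH, fp, fq]
    field_simp
    ring
  · simp only [hX0]
    exact Real.arctan_tan hθ₀.1 hθ₀.2
  · intro τ hτ
    exact mul_pos (hHpos _ (hXle τ hτ)) (pow_pos (inv_pos.2 (dd_pos _)) 3)
  · have h1 : Tendsto (fun τ => e' - X τ) atBot atTop := by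
      have h2 : Tendsto X atBot atBot :=
        hGB.comp (tendsto_atBot_add_const_right _ _ tendsto_id)
      exact tendsto_atTop_add_const_left _ e' (tendsto_neg_atBot_atTop.comp h2)
    refine tendsto_atTop_mono' _ ?_ (hHinf.comp h1)
    filter_upwards [eventually_le_atBot 0] with τ hτ
    have h3 : 1 ≤ (dd (X τ))⁻¹ ^ 3 :=
      one_le_pow₀ ((one_le_inv₀ (dd_pos _)).2 (dd_le_one _))
    exact le_mul_of_one_le_right (hHpos _ (hXle τ hτ)).le h3
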